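/- Let T ∈ 𝒫_f(ℙ). Then the following two statements are equivalent. (1) For all r, m ∈ ℕ with r, m ≥ 1 and every partition ℕ^m = C₁ ∪ ⋯ ∪ C_r, there exist j ∈ {1,…,r} and functions α : 𝒫_f(ℕ^ℕ) → ℕ and H : 𝒫_f(ℕ^ℕ) → 𝒫_f(ℕ) such that (a) whenever F ⊊ G in 𝒫_f(ℕ^ℕ), max H(F) < min H(G), and (b) whenever G₁ ⊊ G₂ ⊊ ⋯ is an infinite strictly increasing chain in 𝒫_f(ℕ^ℕ), f_i ∈ G_i for each i ∈ ℕ, P₁,…,P_m ∈ T, and β₁ < ⋯ < β_m are in 𝒫_f(ℕ), then (Σ_{i∈β₁}α(G_i) + P₁(Σ_{i∈β₁}Σ_{t∈H(G_i)}f_i(t)), …, Σ_{i∈β_m}α(G_i) + P_m(Σ_{i∈β_m}Σ_{t∈H(G_i)}f_i(t))) ∈ C_j. (2) For all r, m ∈ ℕ with r, m ≥ 1, all a₁,…,a_m ∈ ℕ, and every partition ℕ = D₁ ∪ ⋯ ∪ D_r, there exist j ∈ {1,…,r} and functions α, H as above satisfying (a) and such that for every infinite strictly increasing chain G₁ ⊊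 G₂ ⊊ ⋯ in 𝒫_f(ℕ^ℕ), all f_i ∈ G_i, all P₁,…,P_m ∈ T, and all β₁ < ⋯ < β_m in 𝒫_f(ℕ), one has Σ_{l=1}^m a_l·(Σ_{i∈β_l}α(G_i) + P_l(Σ_{i∈β_l}Σ_{t∈H(G_i)}f_i(t))) ∈ D_j. -/

import Mathlib

/-!
A colouring `χ` of `ℕ` pulls back along the linear form `v ↦ ∑ l, a l * v l` to a colouring of
`ℕ^m`, which gives (2) from (1). For the other direction, the conclusion of (1) holds outright, by
the following argument.

Polynomial maps recur simultaneously in every minimal system. This is PET induction: if `ψ` has the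
lowest degree in the family, the maps `z ↦ φ (y + z) - φ y - ψ z` form a family of lower complexity,
and its recurrence lets one focus onto ever more members of a finite open cover. In a minimal
subsystem of the ultrafilters on `ℤ` converging to `+∞`, this recurrence says that every member
of every ultrafilter there contains polynomial configurations `a + P (∑ t ∈ h, f t)`. The
ultrafilters with this property form a closed semigroup, so that there is an idempotent one, `p`.
The colour class is the one lying in the tensor power of `p`, and `α`, `H` are built by recursion
along `⊂`: at each step only finitely many partially completed configurations exist, each can be
continued by `p`-many increments, and a single polynomial configuration continues them all.
-/

namespace MultiCST

/-- The sum `p + q` of ultrafilters on ℕ: `A ∈ p + q` iff `{x : {y : x+y ∈ A} ∈ q} ∈ p`. -/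
def uAdd (p q : Ultrafilter ℕ) : Ultrafilter ℕ :=
  p.bind fun x => q.map fun y => x + y

/-- `A ⊆ ℕ` is a J-set. -/
def IsJSet (A : Set ℕ) : Prop :=
  ∀ F : Finset (ℕ → ℕ), F.Nonempty →
    ∃ (a : ℕ) (β : Finset ℕ), β.Nonempty ∧ ∀ f ∈ F, a + ∑ t ∈ β, f t ∈ A

/-- `p ∈ 𝒥`: every member of `p` is a J-set. -/
def MemJ (p : Ultrafilter ℕ) : Prop := ∀ A : Set ℕ, A ∈ p → IsJSet A

/-- `p` is an idempotent ultrafilter. -/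
def IdempotentUF (p : Ultrafilter ℕ) : Prop := uAdd p p = p

/-- `p` is a minimal idempotent ultrafilter. -/
def IsMinimalIdempotent (p : Ultrafilter ℕ) : Prop :=
  IdempotentUF p ∧
    ∀ q : Ultrafilter ℕ, IdempotentUF q → uAdd q p = q → uAdd p q = q → q = p

/-- Tensor product `⊗_{i=1}^m p_i` of ultrafilters on ℕ, as an ultrafilter on `Fin m → ℕ`. -/
def tensor : ∀ m : ℕ, (Fin m → Ultrafilter ℕ) → Ultrafilter (Fin m → ℕ)
  | 0, _ => pure fun i => i.elim0
  | m + 1, p =>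
      (p 0).bind fun x => (tensor m fun i => p i.succ).map fun v => Fin.cons x v

/-- `f : ℕ → ℕ` is (given by) a polynomial with coefficients in ℕ and zero constant term. -/
def IsPolyZeroConst (f : ℕ → ℕ) : Prop :=
  ∃ P : Polynomial ℕ, P.coeff 0 = 0 ∧ ∀ x, f x = P.eval x

/-- The linear combination `a₁·p₁ + a₂·p₂ + ⋯ + a_m·p_m` of ultrafilters on ℕ. -/
def linComb : ∀ m : ℕ, (Fin m → ℕ) → (Fin m → Ultrafilter ℕ) → Ultrafilter ℕ
  | 0, _, _ => pure 0
  | m + 1, a, p =>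
      uAdd ((p 0).map fun x => a 0 * x)
        (linComb m (fun i => a i.succ) fun i => p i.succ)

section PolynomialMaps

variable {V W Γ : Type*} [AddMonoid V] [AddMonoid W] [AddCommGroup Γ]

/-- The second-order deviation `z ↦ Q (y + z) - Q y - Q z`, measuring the failure of `Q` to be
additive. -/
def crossEffect (y : V) : (V → Γ) →+ (V → Γ) where
  toFun Q z := Q (y + z) - Q y - Q z
  map_zero' := by ext; simp
  map_add' Q R := by ext; simp only [Pi.add_apply]; abel

theorem crossEffect_apply (y : V) (Q : V → Γ) (z : V) :
    crossEffect y Q z = Q (y + z) - Q y - Q z := rfl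

variable (V Γ) in
/-- Polynomial maps `V → Γ` of degree at most `d` without constant term: those which `d`
iterated cross effects, plus one more difference, annihilate. -/
def polyMaps : ℕ → AddSubgroup (V → Γ)
  | 0 => ⊥
  | d + 1 => ⨅ y, (polyMaps d).comap (crossEffect y)

theorem mem_polyMaps_succ {d : ℕ} {Q : V → Γ} :
    Q ∈ polyMaps V Γ (d + 1) ↔ ∀ y, crossEffect y Q ∈ polyMaps V Γ d := by
  simp only [polyMaps, AddSubgroup.mem_iInf, AddSubgroup.mem_comap]

theorem polyMaps_mono : Monotone (polyMaps V Γ) := by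
  refine monotone_nat_of_le_succ fun d ↦ ?_
  induction d with
  | zero => exact bot_le
  | succ d ih =>
    exact fun Q hQ ↦ mem_polyMaps_succ.2 fun y ↦ ih (mem_polyMaps_succ.1 hQ y)

theorem polyMaps_apply_zero {d : ℕ} {Q : V → Γ} (hQ : Q ∈ polyMaps V Γ d) : Q 0 = 0 := by
  induction d generalizing Q with
  | zero => rw [AddSubgroup.mem_bot.1 hQ, Pi.zero_apply]
  | succ d ih => simpa [crossEffect_apply] using ih (mem_polyMaps_succ.1 hQ 0)

theorem comp_addMonoidHom_mem_polyMaps {d : ℕ} {Q : W → Γ} (hQ : Q ∈ polyMaps W Γ d)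
    (g : V →+ W) : Q ∘ g ∈ polyMaps V Γ d := by
  induction d generalizing Q with
  | zero => rw [AddSubgroup.mem_bot.1 hQ]; exact zero_mem _
  | succ d ih =>
    refine mem_polyMaps_succ.2 fun y ↦ ?_
    have hcomp : crossEffect y (Q ∘ g) = crossEffect (g y) Q ∘ g := by
      ext z; simp [crossEffect_apply]
    exact hcomp ▸ ih (mem_polyMaps_succ.1 hQ (g y))

open Polynomial in
theorem natDegree_taylor_sub_self_le {R : Type*} [CommRing R] (P : R[X]) (y : R) {d : ℕ}
    (hP : P.natDegree ≤ d + 1) : (taylor y P - P).natDegree ≤ d := by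
  refine natDegree_le_iff_coeff_eq_zero.2 fun n hn ↦ ?_
  rw [coeff_sub, sub_eq_zero]
  rcases (hP.trans (Nat.succ_le_of_lt hn)).lt_or_eq with h | rfl
  · rw [coeff_eq_zero_of_natDegree_lt h, coeff_eq_zero_of_natDegree_lt (by rwa [natDegree_taylor])]
  · rw [coeff_taylor_natDegree]; rfl

open Polynomial in
theorem eval_mem_polyMaps {R : Type*} [CommRing R] {P : R[X]} {d : ℕ} (hP : P.natDegree ≤ d)
    (h0 : P.coeff 0 = 0) : (P.eval ·) ∈ polyMaps R R d := by
  induction d generalizing P with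
  | zero =>
    refine AddSubgroup.mem_bot.2 ?_
    rw [eq_C_of_natDegree_le_zero hP, h0]
    ext; simp
  | succ d ih =>
    refine mem_polyMaps_succ.2 fun y ↦ ?_
    have htaylor : crossEffect y (P.eval ·) = ((taylor y P - P - C (P.eval y)).eval ·) := by
      ext z
      simp only [crossEffect_apply, eval_sub, taylor_eval, eval_C, add_comm y z]
      abel
    rw [htaylor]
    exact ih (by rw [natDegree_sub_C]; exact natDegree_taylor_sub_self_le P y hP)
      (by simp [taylor_coeff_zero, h0])

end PolynomialMaps

section Classes

variable {G : Type*} [Sub G]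

open scoped Classical in
/-- The classes which remain after differencing against a member of the class `c`: the others are
translated by the representative of `c`, and `c` itself gives way to classes of lower degree. -/
noncomputable def reduceClasses (K : Multiset (ℕ × G)) (c : ℕ × G)
    (Φ : Finset G) : Multiset (ℕ × G) :=
  (K.erase c).map (fun k ↦ (k.1, k.2 - c.2)) + (Finset.range c.1 ×ˢ Φ).val

theorem isDershowitzMannaLT_reduceClasses {K : Multiset (ℕ × G)} {c : ℕ × G} (hc : c ∈ K)
    (Φ : Finset G) :
    ((reduceClasses K c Φ).map Prod.fst).IsDershowitzMannaLT (K.map Prod.fst) := by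
  classical
  refine ⟨(K.erase c).map Prod.fst, (Finset.range c.1 ×ˢ Φ).val.map Prod.fst, {c.1},
    Multiset.singleton_ne_zero _, ?_, ?_, ?_⟩
  · simp [reduceClasses]
  · rw [← Multiset.map_singleton Prod.fst c, ← Multiset.map_add, add_comm,
      Multiset.singleton_add, Multiset.cons_erase hc]
  · simp +contextual

end Classes

section Covering

variable {V Γ : Type*} [AddMonoid V] [AddCommGroup Γ]

/-- Each map in `Φ` agrees, modulo lower degree, with one of the representatives `k` listed in `K`;
the pair `(i, k)` stands for the class of `k` among the maps of degree at most `i + 1`, modulo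
those of degree at most `i`. -/
def IsCoveredBy (Φ : Finset (V → Γ)) (K : Multiset (ℕ × (V → Γ))) : Prop :=
  ∀ Q ∈ Φ, ∃ c ∈ K, Q ∈ polyMaps V Γ (c.1 + 1) ∧ Q - c.2 ∈ polyMaps V Γ c.1

open scoped Classical in
/-- The differenced family of PET induction: all `z ↦ φ (y + z) - φ y - ψ z` with `φ ∈ Φ` and
`y ∈ Y`. -/
noncomputable def differences (Φ : Finset (V → Γ)) (ψ : V → Γ) (Y : Finset V) :
    Finset (V → Γ) :=
  Finset.image₂ (fun φ y ↦ crossEffect y φ + (φ - ψ)) Φ Y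

theorem mem_differences {Φ : Finset (V → Γ)} {ψ : V → Γ} {Y : Finset V} {R : V → Γ} :
    R ∈ differences Φ ψ Y ↔ ∃ φ ∈ Φ, ∃ y ∈ Y, crossEffect y φ + (φ - ψ) = R := by
  classical exact Finset.mem_image₂

open scoped Classical in
theorem IsCoveredBy.erase_differences {Φ : Finset (V → Γ)} {K : Multiset (ℕ × (V → Γ))}
    {i : ℕ} {ψ k₀ : V → Γ} (hψ : ψ ∈ polyMaps V Γ (i + 1)) (hψk₀ : ψ - k₀ ∈ polyMaps V Γ i)
    (hΦ : ∀ Q ∈ Φ, ∃ c ∈ K, i ≤ c.1 ∧ Q ∈ polyMaps V Γ (c.1 + 1) ∧ Q - c.2 ∈ polyMaps V Γ c.1)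
    (Y : Finset V) :
    IsCoveredBy ((differences Φ ψ Y).erase 0) (reduceClasses K (i, k₀) (differences Φ ψ Y)) := by
  classical
  intro R hR
  obtain ⟨hR0, hRdiff⟩ := Finset.mem_erase.1 hR
  obtain ⟨Q, hQ, y, -, hQR⟩ := mem_differences.1 hRdiff
  obtain ⟨c, hcK, hic, hQdeg, hQc⟩ := hΦ Q hQ
  have hcross := mem_polyMaps_succ.1 hQdeg y
  have hRc : R - (c.2 - k₀) ∈ polyMaps V Γ c.1 := by
    have hsplit : R - (c.2 - k₀) = crossEffect y Q + (Q - c.2) - (ψ - k₀) := by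
      rw [← hQR]; abel
    rw [hsplit]
    exact sub_mem (add_mem hcross hQc) (polyMaps_mono hic hψk₀)
  by_cases hc : c = (i, k₀)
  · subst hc
    rw [sub_self, sub_zero] at hRc
    cases i with
    | zero => exact absurd (AddSubgroup.mem_bot.1 hRc) hR0
    | succ j =>
      refine ⟨(j, R), Multiset.mem_add.2 (Or.inr ?_), hRc, by simp⟩
      simpa using hRdiff
  · refine ⟨(c.1, c.2 - k₀), Multiset.mem_add.2 (Or.inl ?_), ?_, hRc⟩
    · exact Multiset.mem_map_of_mem (fun k : ℕ × (V → Γ) ↦ (k.1, k.2 - k₀))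
        ((Multiset.mem_erase_of_ne hc).2 hcK)
    · rw [← hQR]
      exact add_mem (polyMaps_mono c.1.le_succ hcross)
        (sub_mem hQdeg (polyMaps_mono (Nat.succ_le_succ hic) hψ))

end Covering

section Recurrence

variable {V Γ X : Type*} [AddCommMonoid V] [AddCommGroup Γ] [AddAction Γ X]

/-- Some finite sum `z` of terms of `v` with indices beyond `N` is such that all translations
`φ z`, `φ ∈ Φ`, carry `W` into `U`. -/
def CarriesInto (v : ℕ → V) (Φ : Finset (V → Γ)) (N : ℕ) (W U : Set X) : Prop :=
  ∃ h : Finset ℕ, h.Nonempty ∧ (∀ t ∈ h, N < t) ∧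
    ∀ x ∈ W, ∀ φ ∈ Φ, φ (∑ t ∈ h, v t) +ᵥ x ∈ U

theorem CarriesInto.mono_left {v : ℕ → V} {Φ : Finset (V → Γ)} {N : ℕ} {W W' U : Set X}
    (h : CarriesInto v Φ N W U) (hW : W' ⊆ W) : CarriesInto v Φ N W' U :=
  h.imp fun _ ⟨hh, hN, hmove⟩ ↦ ⟨hh, hN, fun x hx ↦ hmove x (hW hx)⟩

variable [TopologicalSpace X]

variable (X) in
/-- Multiple recurrence of the family `Φ` along finite sums of `v`: every nonempty open set has a
point whose translates by all the `φ z`, `φ ∈ Φ`, return to it simultaneously. -/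
def IsRecurrent (v : ℕ → V) (Φ : Finset (V → Γ)) : Prop :=
  ∀ U : Set X, IsOpen U → U.Nonempty → ∀ N, ∃ x ∈ U, CarriesInto v Φ N {x} U

variable {v : ℕ → V} {Φ : Finset (V → Γ)} {ψ : V → Γ}

variable (X v) in
theorem isRecurrent_empty : IsRecurrent X v (∅ : Finset (V → Γ)) := by
  rintro U - ⟨x, hx⟩ N
  exact ⟨x, hx, {N + 1}, by simp, by simp, by simp⟩

open scoped Classical in
theorem IsRecurrent.of_erase_zero (hΦ : IsRecurrent X v (Φ.erase 0)) : IsRecurrent X v Φ := by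
  intro U hU hne N
  obtain ⟨x, hx, h, hh, hN, hreturn⟩ := hΦ U hU hne N
  refine ⟨x, hx, h, hh, hN, ?_⟩
  rintro _ rfl φ hφ
  rcases eq_or_ne φ 0 with rfl | hφ0
  · simpa using hx
  · exact hreturn _ rfl φ (Finset.mem_erase.2 ⟨hφ0, hφ⟩)

section Focusing

variable [ContinuousConstVAdd Γ X] (h0 : ∀ φ ∈ Φ, φ 0 = 0)
  (hdiff : ∀ Y, IsRecurrent X v (differences Φ ψ Y))

include h0 hdiff

theorem exists_isOpen_carriesInto {N : ℕ} {W U : Set X} (hW : IsOpen W) (hU : IsOpen U)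
    (hWU : (W ∩ U).Nonempty) {𝒦 : Finset (Set X)} (h𝒦 : ∀ q ∈ 𝒦, CarriesInto v Φ N W q) :
    ∃ W' : Set X, IsOpen W' ∧ W'.Nonempty ∧ CarriesInto v Φ N W' U ∧
      ∀ q ∈ 𝒦, CarriesInto v Φ N W' q := by
  classical
  choose! s _ hsN hsW using h𝒦
  set Y : Finset V := insert 0 (𝒦.image fun q ↦ ∑ t ∈ s q, v t)
  obtain ⟨x, -, h, hh, hN, hreturn⟩ :=
    hdiff Y (W ∩ U) (hW.inter hU) hWU (max N (𝒦.sup fun q ↦ (s q).sup id))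
  set z := ∑ t ∈ h, v t
  have hNh : ∀ t ∈ h, N < t := fun t ht ↦ (le_max_left _ _).trans_lt (hN t ht)
  refine ⟨⋂ φ ∈ Φ, ⋂ y ∈ Y, ((φ (y + z) - φ y) +ᵥ ·) ⁻¹' (W ∩ U), ?_, ⟨-ψ z +ᵥ x, ?_⟩,
    ⟨h, hh, hNh, fun x' hx' φ hφ ↦ ?_⟩, fun q hq ↦ ⟨s q ∪ h, hh.inr, ?_, fun x' hx' φ hφ ↦ ?_⟩⟩
  · exact isOpen_biInter_finset fun φ _ ↦ isOpen_biInter_finset fun y _ ↦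
      (hW.inter hU).preimage (continuous_const_vadd _)
  · -- `φ (y + z) - φ y - ψ z` is a member of the differenced family, and `x` is recurrent for it.
    simp only [Set.mem_iInter, Set.mem_preimage, vadd_vadd]
    intro φ hφ y hy
    convert hreturn x rfl _ (mem_differences.2 ⟨φ, hφ, y, hy, rfl⟩) using 2
    simp only [Pi.add_apply, Pi.sub_apply, crossEffect_apply]
    abel
  · have hx0 := Set.mem_iInter₂.1 (Set.mem_iInter₂.1 hx' φ hφ) 0 (Finset.mem_insert_self _ _)
    rw [Set.mem_preimage, zero_add, h0 φ hφ, sub_zero] at hx0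
    exact hx0.2
  · exact fun t ht ↦ (Finset.mem_union.1 ht).elim (hsN q hq t) (hNh t)
  · have hdisj : Disjoint (s q) h := by
      refine Finset.disjoint_left.2 fun t hts hth ↦ (hN t hth).not_ge (le_max_of_le_right ?_)
      exact (Finset.le_sup (f := id) hts).trans (Finset.le_sup (f := fun q ↦ (s q).sup id) hq)
    have hxq := Set.mem_iInter₂.1 (Set.mem_iInter₂.1 hx' φ hφ) (∑ t ∈ s q, v t)
      (Finset.mem_insert_of_mem (Finset.mem_image_of_mem _ hq))
    simpa [Finset.sum_union hdisj, vadd_vadd] using hsW q hq _ hxq.1 φ hφ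

theorem exists_mem_cover_carriesInto [Nonempty X] {𝒞 : Finset (Set X)}
    (hopen : ∀ U ∈ 𝒞, IsOpen U) (hcover : ∀ x, ∃ U ∈ 𝒞, x ∈ U) (N : ℕ) :
    ∃ U ∈ 𝒞, ∃ x ∈ U, CarriesInto v Φ N {x} U := by
  classical
  by_contra! hnot
  have hfocus (k : ℕ) : ∃ 𝒦 ⊆ 𝒞, 𝒦.card = k ∧ ∃ W : Set X, IsOpen W ∧ W.Nonempty ∧
      ∀ q ∈ 𝒦, CarriesInto v Φ N W q := by
    induction k with
    | zero => exact ⟨∅, Finset.empty_subset _, rfl, Set.univ, isOpen_univ, Set.univ_nonempty,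
        by simp⟩
    | succ k ih =>
      obtain ⟨𝒦, h𝒦𝒞, hcard, W, hW, ⟨x, hxW⟩, h𝒦⟩ := ih
      obtain ⟨U, hU, hxU⟩ := hcover x
      have hU𝒦 : U ∉ 𝒦 := fun hU𝒦 ↦
        hnot U hU x hxU ((h𝒦 U hU𝒦).mono_left (Set.singleton_subset_iff.2 hxW))
      obtain ⟨W', hW', hne, hWU, hW𝒦⟩ :=
        exists_isOpen_carriesInto h0 hdiff hW (hopen U hU) ⟨x, hxW, hxU⟩ h𝒦
      exact ⟨insert U 𝒦, Finset.insert_subset hU h𝒦𝒞,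
        by rw [Finset.card_insert_of_notMem hU𝒦, hcard], W', hW', hne,
        (Finset.forall_mem_insert ..).2 ⟨hWU, hW𝒦⟩⟩
  obtain ⟨𝒦, h𝒦𝒞, hcard, -⟩ := hfocus (𝒞.card + 1)
  exact (Finset.card_le_card h𝒦𝒞).not_gt (by omega)

open scoped Pointwise in
theorem isRecurrent_of_differences [CompactSpace X] [AddAction.IsMinimal Γ X] :
    IsRecurrent X v Φ := by
  classical
  intro U hU hne N
  have := hne.to_type
  obtain ⟨E, hE⟩ := isCompact_univ.exists_finite_cover_vadd Γ hU hne
  have hcover (x : X) : ∃ U' ∈ E.image (· +ᵥ U), x ∈ U' := by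
    simpa using hE (Set.mem_univ x)
  obtain ⟨U', hU', x, hx, h, hh, hN, hreturn⟩ :=
    exists_mem_cover_carriesInto h0 hdiff (Finset.forall_mem_image.2 fun g _ ↦ hU.vadd g) hcover N
  obtain ⟨g, -, rfl⟩ := Finset.mem_image.1 hU'
  refine ⟨-g +ᵥ x, Set.mem_vadd_set_iff_neg_vadd_mem.1 hx, h, hh, hN, ?_⟩
  rintro _ rfl φ hφ
  rw [vadd_comm, ← Set.mem_vadd_set_iff_neg_vadd_mem]
  exact hreturn x rfl φ hφ

end Focusing

variable [ContinuousConstVAdd Γ X] [CompactSpace X] [AddAction.IsMinimal Γ X]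

open scoped Classical in
theorem IsCoveredBy.isRecurrent (v : ℕ → V) {Φ : Finset (V → Γ)} {K : Multiset (ℕ × (V → Γ))}
    (hK : IsCoveredBy Φ K) : IsRecurrent X v Φ := by
  induction K using (InvImage.wf (Multiset.map Prod.fst)
    (Multiset.wellFounded_isDershowitzMannaLT (α := ℕ))).induction generalizing Φ with
  | _ K ih
  rcases Φ.eq_empty_or_nonempty with rfl | hΦ
  · exact isRecurrent_empty X v
  choose! c hcK hcdeg hc using hK
  obtain ⟨ψ, hψ, hmin⟩ := Φ.exists_min_image (fun φ ↦ (c φ).1) hΦ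
  have hdiff (Y : Finset V) : IsRecurrent X v (differences Φ ψ Y) :=
    .of_erase_zero <| ih _ (isDershowitzMannaLT_reduceClasses (hcK ψ hψ) _) <|
      IsCoveredBy.erase_differences (hcdeg ψ hψ) (hc ψ hψ)
        (fun φ hφ ↦ ⟨c φ, hcK φ hφ, hmin φ hφ, hcdeg φ hφ, hc φ hφ⟩) Y
  exact isRecurrent_of_differences (fun φ hφ ↦ polyMaps_apply_zero (hcdeg φ hφ)) hdiff

theorem isRecurrent_of_forall_mem_polyMaps (v : ℕ → V) {Φ : Finset (V → Γ)}
    (hΦ : ∀ φ ∈ Φ, ∃ d, φ ∈ polyMaps V Γ d) : IsRecurrent X v Φ := by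
  choose! d hd using hΦ
  refine IsCoveredBy.isRecurrent v (K := Φ.val.map fun φ ↦ (d φ, φ)) fun φ hφ ↦ ?_
  exact ⟨(d φ, φ), Multiset.mem_map_of_mem _ hφ, polyMaps_mono (Nat.le_succ _) (hd φ hφ), by simp⟩

end Recurrence

section MinimalSubsystem

instance {Γ X : Type*} [TopologicalSpace X] [VAdd Γ X] [ContinuousConstVAdd Γ X]
    (S : SubAddAction Γ X) : ContinuousConstVAdd Γ S :=
  Topology.IsInducing.subtypeVal.continuousConstVAdd id rfl

variable {Γ X : Type*} [TopologicalSpace X] [CompactSpace X]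

theorem exists_minimal_isClosed_vadd_invariant [VAdd Γ X] {C : Set X} (hC : IsClosed C)
    (hne : C.Nonempty) (hinv : ∀ g : Γ, ∀ x ∈ C, g +ᵥ x ∈ C) :
    ∃ K ⊆ C, Minimal
      (· ∈ {K : Set X | IsClosed K ∧ K.Nonempty ∧ ∀ g : Γ, ∀ x ∈ K, g +ᵥ x ∈ K}) K := by
  refine zorn_superset_nonempty _ (fun c hc hchain hcne ↦ ?_) C ⟨hC, hne, hinv⟩
  refine ⟨⋂₀ c, ⟨isClosed_sInter fun K hK ↦ (hc hK).1, ?_, fun g x hx K hK ↦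
    (hc hK).2.2 g x (hx K hK)⟩, fun K hK ↦ Set.sInter_subset_of_mem hK⟩
  have := hcne.to_subtype
  have hdirected : DirectedOn (· ⊇ ·) c := IsChain.directedOn hchain.symm
  exact IsCompact.nonempty_sInter_of_directed_nonempty_isCompact_isClosed hdirected
    (fun K hK ↦ (hc hK).2.1) (fun K hK ↦ (hc hK).1.isCompact) (fun K hK ↦ (hc hK).1)

open scoped Pointwise in
theorem exists_subAddAction_isMinimal [AddMonoid Γ] [AddAction Γ X] [ContinuousConstVAdd Γ X]
    {C : Set X} (hC : IsClosed C) (hne : C.Nonempty) (hinv : ∀ g : Γ, ∀ x ∈ C, g +ᵥ x ∈ C) :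
    ∃ S : SubAddAction Γ X, (S : Set X) ⊆ C ∧ IsClosed (S : Set X) ∧ (S : Set X).Nonempty ∧
      AddAction.IsMinimal Γ S := by
  obtain ⟨K, hKC, ⟨hK, hKne, hKinv⟩, hKmin⟩ := exists_minimal_isClosed_vadd_invariant hC hne hinv
  refine ⟨⟨K, fun g {x} ↦ hKinv g x⟩, hKC, hK, hKne, ⟨fun x ↦ fun y ↦ closure_subtype.2 ?_⟩⟩
  have himage : (↑) '' AddAction.orbit Γ x = AddAction.orbit Γ (x : X) :=
    (Set.range_comp Subtype.val fun g : Γ ↦ g +ᵥ x).symm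
  rw [himage]
  refine hKmin ⟨isClosed_closure, (AddAction.nonempty_orbit _).closure, fun g z hz ↦ ?_⟩ ?_ y.2
  · exact vadd_closure_orbit_subset g (x : X) (Set.vadd_mem_vadd_set hz)
  · exact closure_minimal (Set.range_subset_iff.2 fun g ↦ hKinv g x x.2) hK

end MinimalSubsystem

section UltrafilterAction

variable {M α : Type*} [AddMonoid M] [AddAction M α]

/-- Translations of `α` act on the space of ultrafilters on `α`. -/
instance : AddAction M (Ultrafilter α) where
  vadd g q := q.map (g +ᵥ ·)
  zero_vadd q := by
    change q.map ((0 : M) +ᵥ ·) = q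
    simp
  add_vadd g h q := by
    change q.map ((g + h) +ᵥ ·) = (q.map (h +ᵥ ·)).map (g +ᵥ ·)
    simp only [Ultrafilter.map_map, add_vadd, Function.comp_def]

instance : ContinuousConstVAdd M (Ultrafilter α) where
  continuous_const_vadd g := by
    refine ultrafilterBasis_is_basis.continuous_iff.2 ?_
    rintro _ ⟨A, rfl⟩
    exact ultrafilter_isOpen_basic ((g +ᵥ ·) ⁻¹' A)

end UltrafilterAction

section PolyJSet

theorem IsPolyZeroConst.exists_comp_mem_polyMaps {V : Type*} [AddCommMonoid V] {P : ℕ → ℕ}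
    (hP : IsPolyZeroConst P) (g : V →+ ℕ) :
    ∃ d, (fun u ↦ (P (g u) : ℤ)) ∈ polyMaps V ℤ d := by
  obtain ⟨p, h0, hp⟩ := hP
  refine ⟨(p.map (Nat.castRingHom ℤ)).natDegree, ?_⟩
  convert comp_addMonoidHom_mem_polyMaps
    (eval_mem_polyMaps (P := p.map (Nat.castRingHom ℤ)) le_rfl (by simp [h0]))
    ((Nat.castAddMonoidHom ℤ).comp g) using 1
  ext u
  simp [hp, Polynomial.eval_natCast_map]

/-- The polynomial analogue of a J-set, with translations and index sets beyond any prescribed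
bound: `A` contains some `a + P (∑ t ∈ h, f t)` simultaneously for any finitely many polynomials
`P` and sequences `f`. -/
def IsPolyJSet (A : Set ℕ) : Prop :=
  ∀ R : Finset (ℕ → ℕ), (∀ P ∈ R, IsPolyZeroConst P) → ∀ (F : Finset (ℕ → ℕ)) (N : ℕ),
    ∃ (a : ℕ) (h : Finset ℕ), h.Nonempty ∧ (∀ t ∈ h, N < t) ∧
      ∀ P ∈ R, ∀ f ∈ F, a + P (∑ t ∈ h, f t) ∈ A

variable {S : SubAddAction ℤ (Ultrafilter ℤ)}

open Filter

theorem isPolyJSet_of_mem_isMinimal (hS : IsClosed (S : Set (Ultrafilter ℤ)))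
    [AddAction.IsMinimal ℤ S] (hpos : ∀ q ∈ S, ↑q ≤ (atTop : Filter ℤ)) {q : Ultrafilter ℤ}
    (hq : q ∈ S) {A : Set ℕ} (hA : A ∈ q.map Int.toNat) : IsPolyJSet A := by
  classical
  intro R hR F N
  have : CompactSpace S := isCompact_iff_compactSpace.1 hS.isCompact
  have hΦ : ∀ φ ∈ Finset.image₂ (fun (P f : ℕ → ℕ) (u : (ℕ → ℕ) → ℕ) ↦ (P (u f) : ℤ)) R F,
      ∃ d, φ ∈ polyMaps ((ℕ → ℕ) → ℕ) ℤ d :=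
    Finset.forall_mem_image₂.2 fun P hP f _ ↦
      (hR P hP).exists_comp_mem_polyMaps (Pi.evalAddMonoidHom (fun _ ↦ ℕ) f)
  obtain ⟨x, -, h, hh, hN, hreturn⟩ :=
    -- All sequences `f` at once form a single sequence in `(ℕ → ℕ) → ℕ`.
    isRecurrent_of_forall_mem_polyMaps (X := S) (fun t f ↦ f t) hΦ
      {s | Int.toNat ⁻¹' A ∈ s.1} ((ultrafilter_isOpen_basic _).preimage continuous_subtype_val)
      ⟨⟨q, hq⟩, hA⟩ N
  have hshift : ∀ᶠ b in (x.1 : Filter ℤ), ∀ P ∈ R, ∀ f ∈ F,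
      Int.toNat (P (∑ t ∈ h, f t) + b) ∈ A := by
    simp only [eventually_all_finset]
    intro P hP f hf
    have hmem : Int.toNat ⁻¹' A ∈ (P (∑ t ∈ h, f t) : ℤ) +ᵥ x.1 := by
      simpa using hreturn x rfl _ (Finset.mem_image₂_of_mem hP hf)
    exact hmem
  obtain ⟨b, hb, hb0⟩ := (hshift.and (hpos x x.2 (eventually_ge_atTop 0))).exists
  refine ⟨b.toNat, h, hh, hN, fun P hP f hf ↦ ?_⟩
  convert hb P hP f hf using 1
  omega

theorem exists_ultrafilter_forall_isPolyJSet : ∃ p : Ultrafilter ℕ, ∀ A ∈ p, IsPolyJSet A := by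
  have hclosed : IsClosed {q : Ultrafilter ℤ | ↑q ≤ (atTop : Filter ℤ)} := by
    simp only [atTop, le_iInf_iff, le_principal_iff, Set.ofPred_forall]
    exact isClosed_iInter fun n ↦ ultrafilter_isClosed_basic _
  obtain ⟨S, hSpos, hS, ⟨q, hq⟩, hmin⟩ := exists_subAddAction_isMinimal (Γ := ℤ) hclosed
    ⟨Ultrafilter.of atTop, Ultrafilter.of_le _⟩
    fun g q hq ↦ (tendsto_atTop_add_const_left _ g tendsto_id).mono_left hq
  exact ⟨q.map Int.toNat, fun A hA ↦ isPolyJSet_of_mem_isMinimal hS (fun _ hx ↦ hSpos hx) hq hA⟩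

end PolyJSet

attribute [local instance] Ultrafilter.add Ultrafilter.addSemigroup

theorem isClosed_setOf_forall_mem_ultrafilter {α : Type*} (p : Set α → Prop) :
    IsClosed {q : Ultrafilter α | ∀ A ∈ q, p A} := by
  have hcompl : {q : Ultrafilter α | ∀ A ∈ q, p A} = ⋂ A ∈ {A | ¬ p A}, {q | A ∈ q}ᶜ := by
    ext q
    simp only [Set.mem_ofPred_eq, Set.mem_iInter, Set.mem_compl_iff]
    exact forall_congr' fun A ↦ not_imp_not.symm
  rw [hcompl]
  exact isClosed_biInter fun A _ ↦ (ultrafilter_isOpen_basic A).isClosed_compl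

theorem exists_idempotent_forall_isPolyJSet :
    ∃ p : Ultrafilter ℕ, p + p = p ∧ ∀ A ∈ p, IsPolyJSet A := by
  have hadd (p q : Ultrafilter ℕ) (hq : ∀ A ∈ q, IsPolyJSet A) : ∀ A ∈ p + q, IsPolyJSet A := by
    intro A hA R hR F N
    obtain ⟨b, hb⟩ := ((Ultrafilter.eventually_add p q (· ∈ A)).1 hA).exists
    obtain ⟨a, h, hh, hN, ha⟩ := hq {c | b + c ∈ A} hb R hR F N
    exact ⟨b + a, h, hh, hN, fun P hP f hf ↦ by rw [add_assoc]; exact ha P hP f hf⟩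
  obtain ⟨p, hp, hidem⟩ := exists_idempotent_in_compact_add_subsemigroup
    Ultrafilter.continuous_add_left _ exists_ultrafilter_forall_isPolyJSet
    (isClosed_setOf_forall_mem_ultrafilter _).isCompact fun p _ q hq ↦ hadd p q hq
  exact ⟨p, hidem, hp⟩

section Star

variable {M : Type*} [AddSemigroup M] {p : Ultrafilter M} {A : Set M}

/-- The part of `A` whose elements translate `p`-many elements back into `A`; usually written
`A⋆`, for an idempotent `p`. -/
def starSet (p : Ultrafilter M) (A : Set M) : Set M :=
  {v ∈ A | {w | v + w ∈ A} ∈ p}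

theorem starSet_mem (hp : p + p = p) (hA : A ∈ p) : starSet p A ∈ p :=
  Filter.inter_mem hA ((Ultrafilter.eventually_add p p (· ∈ A)).1 (hp.symm ▸ hA))

theorem setOf_add_mem_starSet_mem (hp : p + p = p) {v : M} (hv : v ∈ starSet p A) :
    {w | v + w ∈ starSet p A} ∈ p := by
  filter_upwards [starSet_mem hp hv.2] with w hw
  exact ⟨hw.1, by simpa only [Set.mem_ofPred_eq, add_assoc] using hw.2⟩

end Star

theorem IsPolyZeroConst.apply_zero {P : ℕ → ℕ} (hP : IsPolyZeroConst P) : P 0 = 0 := by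
  obtain ⟨q, h0, hq⟩ := hP
  rw [hq, ← Polynomial.coeff_zero_eq_eval_zero, h0]

theorem IsPolyZeroConst.exists_apply_add {P : ℕ → ℕ} (hP : IsPolyZeroConst P) (y : ℕ) :
    ∃ Q, IsPolyZeroConst Q ∧ ∀ z, P (y + z) = P y + Q z := by
  obtain ⟨q, -, hq⟩ := hP
  set s := Polynomial.taylor y q with hs
  refine ⟨fun z ↦ (s.divX * Polynomial.X).eval z, ⟨_, by simp, fun _ ↦ rfl⟩, fun z ↦ ?_⟩
  have heval := congrArg (Polynomial.eval z) s.divX_mul_X_add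
  rw [Polynomial.eval_add, Polynomial.eval_C, hs, Polynomial.taylor_coeff_zero,
    Polynomial.taylor_eval] at heval
  rw [hq, hq, add_comm y z, ← heval, add_comm]

/-- The first coordinates `v` for which the section of `C` at `v` is large for the tensor power
of `p`; every `v` qualifies when there are no coordinates. -/
def headSet (p : Ultrafilter ℕ) : ∀ {n : ℕ}, Set (Fin n → ℕ) → Set ℕ
  | 0, _ => Set.univ
  | n + 1, C => {v | {w : Fin n → ℕ | (Fin.cons v w : Fin (n + 1) → ℕ) ∈ C} ∈ tensor n fun _ ↦ p}

theorem headSet_mem {p : Ultrafilter ℕ} {n : ℕ} {C : Set (Fin n → ℕ)}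
    (hC : C ∈ tensor n fun _ ↦ p) : headSet p C ∈ p := by
  cases n with
  | zero => exact Filter.univ_mem
  | succ n => exact hC

/-- A state of the process which reads blocks of indices in order and forms one coordinate
`shift + P arg` from each block: `goal` is the set in which the `coords` coordinates still to be
produced must lie, and `shift`, `arg` are the sums accumulated over the current block. -/
structure State where
  coords : ℕ
  goal : Set (Fin coords → ℕ)
  shift : ℕ
  arg : ℕ

namespace State

/-- The state at the beginning of a block. -/
def start {n : ℕ} (C : Set (Fin n → ℕ)) : State := ⟨n, C, 0, 0⟩

/-- The coordinate produced by ending the current block with the polynomial `P`. -/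
def value (s : State) (P : ℕ → ℕ) : ℕ := s.shift + P s.arg

/-- Prolong the current block. -/
def absorb (s : State) (a z : ℕ) : State := ⟨s.coords, s.goal, s.shift + a, s.arg + z⟩

/-- End the current block with the coordinate `v`; when no coordinate is left, `v` is discarded. -/
def close : State → ℕ → State
  | ⟨0, C, _, _⟩, _ => start C
  | ⟨n + 1, C, _, _⟩, v => start {w : Fin n → ℕ | (Fin.cons v w : Fin (n + 1) → ℕ) ∈ C}

/-- The current block may be ended now with any polynomial of `T`. -/
def Accepted (T : Finset (ℕ → ℕ)) (p : Ultrafilter ℕ) (s : State) : Prop :=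
  ∀ P ∈ T, s.value P ∈ starSet p (headSet p s.goal)

/-- The current block can be prolonged, by `p`-many increments, to one that may be ended. -/
def Valid (T : Finset (ℕ → ℕ)) (p : Ultrafilter ℕ) (s : State) : Prop :=
  ∀ P ∈ T, {w | s.value P + w ∈ starSet p (headSet p s.goal)} ∈ p

variable {T : Finset (ℕ → ℕ)} {p : Ultrafilter ℕ} {s : State}

theorem Accepted.valid (hp : p + p = p) (hs : s.Accepted T p) : s.Valid T p :=
  fun P hP ↦ setOf_add_mem_starSet_mem hp (hs P hP)

theorem valid_start (hTP : ∀ P ∈ T, IsPolyZeroConst P) (hp : p + p = p) {n : ℕ}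
    {C : Set (Fin n → ℕ)} (hC : headSet p C ∈ p) : (start C).Valid T p := by
  intro P hP
  simpa only [start, value, (hTP P hP).apply_zero, zero_add, Set.ofPred_mem_eq] using
    starSet_mem hp hC

theorem Accepted.valid_close (hTP : ∀ P ∈ T, IsPolyZeroConst P) (hp : p + p = p)
    (hs : s.Accepted T p) {P : ℕ → ℕ} (hP : P ∈ T) : (s.close (s.value P)).Valid T p := by
  obtain ⟨_ | n, C, x, y⟩ := s
  · exact valid_start hTP hp Filter.univ_mem
  · exact valid_start hTP hp (headSet_mem (hs P hP).1)

theorem exists_forall_absorb_accepted (hTP : ∀ P ∈ T, IsPolyZeroConst P)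
    (hJ : ∀ A ∈ p, IsPolyJSet A) {S : Finset State} (hS : ∀ s ∈ S, s.Valid T p)
    (G : Finset (ℕ → ℕ)) (N : ℕ) :
    ∃ (a : ℕ) (h : Finset ℕ), h.Nonempty ∧ (∀ t ∈ h, N < t) ∧
      ∀ s ∈ S, ∀ f ∈ G, (s.absorb a (∑ t ∈ h, f t)).Accepted T p := by
  classical
  choose! Q hQ hadd using fun P (hP : IsPolyZeroConst P) y ↦ hP.exists_apply_add y
  have hlarge : {w | ∀ s ∈ S, ∀ P ∈ T, s.value P + w ∈ starSet p (headSet p s.goal)} ∈ p := by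
    simp only [Set.ofPred_forall]
    exact (Filter.biInter_finset_mem S).2 fun s hs ↦ (Filter.biInter_finset_mem T).2 (hS s hs)
  have hpoly : ∀ R ∈ Finset.image₂ (fun s P ↦ Q P s.arg) S T, IsPolyZeroConst R :=
    Finset.forall_mem_image₂.2 fun s _ P hP ↦ hQ P (hTP P hP) s.arg
  obtain ⟨a, h, hh, hN, ha⟩ := hJ _ hlarge _ hpoly G N
  refine ⟨a, h, hh, hN, fun s hs f hf P hP ↦ ?_⟩
  have hvalue : (s.absorb a (∑ t ∈ h, f t)).value P =
      s.value P + (a + Q P s.arg (∑ t ∈ h, f t)) := by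
    simp only [absorb, value, hadd P (hTP P hP)]
    ring
  rw [hvalue]
  exact ha _ (Finset.mem_image₂_of_mem hs hP) f hf s hs P hP

end State

/-- The data attached to `G` by the recursive construction: the values `shift = α(G)` and
`support = H(G)`, and a finite set of states, among them `s₀`, which these values make accepted. -/
structure Stage (T : Finset (ℕ → ℕ)) (p : Ultrafilter ℕ) (s₀ : State) (G : Finset (ℕ → ℕ)) where
  shift : ℕ
  support : Finset ℕ
  states : Finset State
  support_nonempty : support.Nonempty
  start_mem : s₀ ∈ states
  valid : ∀ s ∈ states, s.Valid T p
  accepted : ∀ s ∈ states, ∀ f ∈ G, (s.absorb shift (∑ t ∈ support, f t)).Accepted T p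

namespace Stage

variable {T : Finset (ℕ → ℕ)} {p : Ultrafilter ℕ} {s₀ : State} {F G : Finset (ℕ → ℕ)}

open scoped Classical in
/-- The states obtained by prolonging the current block by the values of the stage. -/
noncomputable def reached (σ : Stage T p s₀ G) : Finset State :=
  Finset.image₂ (fun s f ↦ s.absorb σ.shift (∑ t ∈ σ.support, f t)) σ.states G

open scoped Classical in
/-- The states which later stages have to take into account. -/
noncomputable def next (σ : Stage T p s₀ G) : Finset State :=
  σ.states ∪ (σ.reached ∪ Finset.image₂ (fun s P ↦ s.close (s.value P)) σ.reached T)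

theorem absorb_mem_reached (σ : Stage T p s₀ G) {s : State} (hs : s ∈ σ.states) {f : ℕ → ℕ}
    (hf : f ∈ G) : s.absorb σ.shift (∑ t ∈ σ.support, f t) ∈ σ.reached := by
  classical exact Finset.mem_image₂_of_mem hs hf

theorem states_subset_next (σ : Stage T p s₀ G) : σ.states ⊆ σ.next := by
  classical exact Finset.subset_union_left

theorem reached_subset_next (σ : Stage T p s₀ G) : σ.reached ⊆ σ.next := by
  classical exact Finset.subset_union_left.trans Finset.subset_union_right

theorem close_mem_next (σ : Stage T p s₀ G) {s : State} (hs : s ∈ σ.reached) {P : ℕ → ℕ}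
    (hP : P ∈ T) : s.close (s.value P) ∈ σ.next := by
  classical exact Finset.mem_union_right _ <| Finset.mem_union_right _ <|
    Finset.mem_image₂_of_mem hs hP

theorem accepted_of_mem_reached (σ : Stage T p s₀ G) : ∀ s ∈ σ.reached, s.Accepted T p := by
  classical exact Finset.forall_mem_image₂.2 σ.accepted

theorem valid_of_mem_next (hTP : ∀ P ∈ T, IsPolyZeroConst P) (hp : p + p = p)
    (σ : Stage T p s₀ G) : ∀ s ∈ σ.next, s.Valid T p := by
  classical
  simp only [next, Finset.forall_mem_union, Finset.forall_mem_image₂]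
  exact ⟨σ.valid, fun s hs ↦ (σ.accepted_of_mem_reached s hs).valid hp,
    fun s hs P hP ↦ (σ.accepted_of_mem_reached s hs).valid_close hTP hp hP⟩

/-- Compatibility of the stages attached to `F ⊂ G`: the supports are in order, and the stage of
`G` takes over every state left by that of `F`. -/
def Precedes (σ : Stage T p s₀ F) (τ : Stage T p s₀ G) : Prop :=
  (∀ x ∈ σ.support, ∀ y ∈ τ.support, x < y) ∧ σ.next ⊆ τ.states

theorem exists_forall_precedes (hTP : ∀ P ∈ T, IsPolyZeroConst P) (hp : p + p = p)
    (hJ : ∀ A ∈ p, IsPolyJSet A) (hs₀ : s₀.Valid T p) (G : Finset (ℕ → ℕ))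
    (σ : ∀ F, F ⊂ G → Stage T p s₀ F) :
    ∃ τ : Stage T p s₀ G, ∀ F (hF : F ⊂ G), (σ F hF).Precedes τ := by
  classical
  let prev (F : G.ssubsets) := σ F (Finset.mem_ssubsets.1 F.2)
  let S : Finset State := insert s₀ (G.ssubsets.attach.biUnion fun F ↦ (prev F).next)
  have hS : ∀ s ∈ S, s.Valid T p := by
    refine (Finset.forall_mem_insert ..).2 ⟨hs₀, fun s hs ↦ ?_⟩
    obtain ⟨F, -, hF⟩ := Finset.mem_biUnion.1 hs
    exact (prev F).valid_of_mem_next hTP hp s hF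
  obtain ⟨a, h, hh, hN, hacc⟩ := State.exists_forall_absorb_accepted hTP hJ hS G
    (G.ssubsets.attach.sup fun F ↦ (prev F).support.sup id)
  refine ⟨⟨a, h, S, hh, Finset.mem_insert_self _ _, hS, hacc⟩, fun F hF ↦ ⟨fun x hx y hy ↦ ?_, ?_⟩⟩
  all_goals have hFG := Finset.mem_attach G.ssubsets ⟨F, Finset.mem_ssubsets.2 hF⟩
  · refine lt_of_le_of_lt ?_ (hN y hy)
    exact (Finset.le_sup (f := id) hx).trans
      (Finset.le_sup (f := fun F ↦ (prev F).support.sup id) hFG)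
  · exact (Finset.subset_biUnion_of_mem (fun F ↦ (prev F).next) hFG).trans
      (Finset.subset_insert _ _)

section Chain

variable {𝒢 : ℕ → Finset (ℕ → ℕ)} {σ : ∀ i, Stage T p s₀ (𝒢 i)}
  (hσ : ∀ i j, i < j → (σ i).Precedes (σ j)) {f : ℕ → ℕ → ℕ} (hf : ∀ i, f i ∈ 𝒢 i)

include hσ

theorem states_monotone : Monotone fun i ↦ (σ i).states :=
  monotone_nat_of_le_succ fun i ↦ (σ i).states_subset_next.trans (hσ i (i + 1) i.lt_succ_self).2

include hf

theorem exists_absorb_sum_mem_reached {i₀ : ℕ} {s : State} (hs : s ∈ (σ i₀).states)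
    {β : Finset ℕ} (hβ : β.Nonempty) (hi₀ : ∀ i ∈ β, i₀ ≤ i) :
    ∃ b ∈ β, s.absorb (∑ i ∈ β, (σ i).shift) (∑ i ∈ β, ∑ t ∈ (σ i).support, f i t) ∈
      (σ b).reached := by
  induction β using Finset.induction_on_max with
  | empty => exact absurd hβ Finset.not_nonempty_empty
  | insert b β hb ih =>
    have hbβ : b ∉ β := fun h ↦ (hb b h).false
    have hstate : s.absorb (∑ i ∈ β, (σ i).shift) (∑ i ∈ β, ∑ t ∈ (σ i).support, f i t) ∈
        (σ b).states := by
      rcases β.eq_empty_or_nonempty with rfl | hβ'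
      · exact states_monotone hσ (hi₀ b (Finset.mem_insert_self _ _)) hs
      · obtain ⟨c, hc, hreached⟩ := ih hβ' fun i hi ↦ hi₀ i (Finset.mem_insert_of_mem hi)
        exact (hσ c b (hb c hc)).2 ((σ c).reached_subset_next hreached)
    refine ⟨b, Finset.mem_insert_self _ _, ?_⟩
    convert (σ b).absorb_mem_reached hstate (hf b) using 1
    rw [Finset.sum_insert hbβ, Finset.sum_insert hbβ, add_comm (σ b).shift,
      add_comm (∑ t ∈ (σ b).support, f b t)]
    simp only [State.absorb, add_assoc]

theorem tuple_mem_of_start_mem_states {n : ℕ} {C : Set (Fin n → ℕ)}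
    (hC : C ∈ tensor n fun _ ↦ p) {i₀ : ℕ} (hstart : State.start C ∈ (σ i₀).states)
    {P : Fin n → ℕ → ℕ} (hP : ∀ l, P l ∈ T) {β : Fin n → Finset ℕ} (hβ : ∀ l, (β l).Nonempty)
    (hord : ∀ l l', l < l' → ∀ x ∈ β l, ∀ y ∈ β l', x < y) (hi₀ : ∀ l, ∀ i ∈ β l, i₀ ≤ i) :
    (fun l ↦ (∑ i ∈ β l, (σ i).shift) + P l (∑ i ∈ β l, ∑ t ∈ (σ i).support, f i t)) ∈ C := by
  induction n generalizing i₀ with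
  | zero => convert (show (fun i ↦ i.elim0) ∈ C from hC)
  | succ n ih =>
    obtain ⟨b, hb, hreached⟩ := exists_absorb_sum_mem_reached hσ hf hstart (hβ 0) (hi₀ 0)
    set s := (State.start C).absorb (∑ i ∈ β 0, (σ i).shift)
      (∑ i ∈ β 0, ∑ t ∈ (σ i).support, f i t)
    have hsection := ((σ b).accepted_of_mem_reached s hreached (P 0) (hP 0)).1
    have hclose : s.close (s.value (P 0)) ∈ (σ (b + 1)).states :=
      (hσ b (b + 1) b.lt_succ_self).2 ((σ b).close_mem_next hreached (hP 0))
    have htail := ih hsection hclose (fun l ↦ hP l.succ) (fun l ↦ hβ l.succ)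
      (fun l l' hl ↦ hord _ _ (Fin.succ_lt_succ_iff.2 hl))
      (fun l i hi ↦ hord 0 l.succ l.succ_pos b hb i hi)
    have hhead : s.value (P 0) =
        (∑ i ∈ β 0, (σ i).shift) + P 0 (∑ i ∈ β 0, ∑ t ∈ (σ i).support, f i t) := by
      simp only [s, State.value, State.absorb, State.start, zero_add]
    rw [hhead] at htail
    rw [← Fin.cons_self_tail fun l ↦ _]
    exact htail

end Chain

end Stage

theorem exists_forall_rel_of_wellFounded {X : Type*} {r : X → X → Prop} (wf : WellFounded r)
    {D : X → Type*} (R : ∀ {x y}, D x → D y → Prop)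
    (h : ∀ y (prev : ∀ x, r x y → D x), ∃ d : D y, ∀ x hx, R (prev x hx) d) :
    ∃ g : ∀ x, D x, ∀ x y, r x y → R (g x) (g y) := by
  choose next hnext using h
  refine ⟨wf.fix next, fun x y hxy ↦ ?_⟩
  rw [wf.fix_eq next y]
  exact hnext y (fun z _ ↦ wf.fix next z) x hxy

theorem exists_forall_chain_color_eq {T : Finset (ℕ → ℕ)} (hTP : ∀ P ∈ T, IsPolyZeroConst P)
    {m : ℕ} {κ : Type*} [Finite κ] (χ : (Fin m → ℕ) → κ) :
    ∃ (j : κ) (α : Finset (ℕ → ℕ) → ℕ) (H : Finset (ℕ → ℕ) → Finset ℕ),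
      (∀ F : Finset (ℕ → ℕ), (H F).Nonempty) ∧
      (∀ F G : Finset (ℕ → ℕ), F ⊂ G → ∀ x ∈ H F, ∀ y ∈ H G, x < y) ∧
      ∀ G : ℕ → Finset (ℕ → ℕ), (∀ i j', i < j' → G i ⊂ G j') →
        ∀ f : ℕ → ℕ → ℕ, (∀ i, f i ∈ G i) → ∀ P : Fin m → ℕ → ℕ, (∀ l, P l ∈ T) →
        ∀ β : Fin m → Finset ℕ, (∀ l, (β l).Nonempty) →
          (∀ l l' : Fin m, l < l' → ∀ x ∈ β l, ∀ y ∈ β l', x < y) →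
          χ (fun l ↦ (∑ i ∈ β l, α (G i)) + P l (∑ i ∈ β l, ∑ t ∈ H (G i), f i t)) = j := by
  obtain ⟨p, hp, hJ⟩ := exists_idempotent_forall_isPolyJSet
  obtain ⟨j, hj⟩ := Ultrafilter.eq_pure_of_finite ((tensor m fun _ ↦ p).map χ)
  have hC : χ ⁻¹' {j} ∈ tensor m fun _ ↦ p := by
    rw [← Ultrafilter.mem_map, hj]
    exact Set.mem_singleton j
  obtain ⟨σ, hσ⟩ := exists_forall_rel_of_wellFounded wellFounded_lt Stage.Precedes
    (Stage.exists_forall_precedes hTP hp hJ (State.valid_start hTP hp (headSet_mem hC)))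
  exact ⟨j, fun G ↦ (σ G).shift, fun G ↦ (σ G).support, fun G ↦ (σ G).support_nonempty,
    fun F G hFG ↦ (hσ F G hFG).1, fun G hG f hf P hP β hβ hord ↦
      Stage.tuple_mem_of_start_mem_states (fun i j hij ↦ hσ _ _ (hG i j hij)) hf hC
        (σ (G 0)).start_mem hP hβ hord fun _ _ _ ↦ Nat.zero_le _⟩

/-- Equivalence of the multidimensional monochromatic form and the linear-combination
monochromatic form of the polynomial stronger central sets theorem (single pair of
witnessing functions). -/
theorem equivalence_multidim_vs_linear_comb_I
    (T : Finset (ℕ → ℕ)) (hT : T.Nonempty) (hTP : ∀ P ∈ T, IsPolyZeroConst P) :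
    (∀ r m : ℕ, 1 ≤ r → 1 ≤ m → ∀ χ : (Fin m → ℕ) → Fin r,
      ∃ (j : Fin r) (α : Finset (ℕ → ℕ) → ℕ) (H : Finset (ℕ → ℕ) → Finset ℕ),
        (∀ F : Finset (ℕ → ℕ), F.Nonempty → (H F).Nonempty) ∧
        (∀ F G : Finset (ℕ → ℕ), F.Nonempty → F ⊂ G →
          ∀ x ∈ H F, ∀ y ∈ H G, x < y) ∧
        (∀ G : ℕ → Finset (ℕ → ℕ),
          (∀ i, (G i).Nonempty) → (∀ i j', i < j' → G i ⊂ G j') →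
          ∀ f : ℕ → ℕ → ℕ, (∀ i, f i ∈ G i) →
          ∀ P : Fin m → ℕ → ℕ, (∀ l, P l ∈ T) →
          ∀ β : Fin m → Finset ℕ,
            (∀ l, (β l).Nonempty) →
            (∀ l l' : Fin m, l < l' → ∀ x ∈ β l, ∀ y ∈ β l', x < y) →
            χ (fun l => (∑ i ∈ β l, α (G i)) +
                P l (∑ i ∈ β l, ∑ t ∈ H (G i), f i t)) = j))
    ↔
    (∀ r m : ℕ, 1 ≤ r → 1 ≤ m → ∀ a : Fin m → ℕ, ∀ χ : ℕ → Fin r,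
      ∃ (j : Fin r) (α : Finset (ℕ → ℕ) → ℕ) (H : Finset (ℕ → ℕ) → Finset ℕ),
        (∀ F : Finset (ℕ → ℕ), F.Nonempty → (H F).Nonempty) ∧
        (∀ F G : Finset (ℕ → ℕ), F.Nonempty → F ⊂ G →
          ∀ x ∈ H F, ∀ y ∈ H G, x < y) ∧
        (∀ G : ℕ → Finset (ℕ → ℕ),
          (∀ i, (G i).Nonempty) → (∀ i j', i < j' → G i ⊂ G j') →
          ∀ f : ℕ → ℕ → ℕ, (∀ i, f i ∈ G i) →
          ∀ P : Fin m → ℕ → ℕ, (∀ l, P l ∈ T) →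
          ∀ β : Fin m → Finset ℕ,
            (∀ l, (β l).Nonempty) →
            (∀ l l' : Fin m, l < l' → ∀ x ∈ β l, ∀ y ∈ β l', x < y) →
            χ (∑ l : Fin m, a l * ((∑ i ∈ β l, α (G i)) +
                P l (∑ i ∈ β l, ∑ t ∈ H (G i), f i t))) = j)) := by
  constructor
  · exact fun h r m hr hm a χ ↦ h r m hr hm fun v ↦ χ (∑ l, a l * v l)
  · intro _ r m _ _ χ
    obtain ⟨j, α, H, hH, hlt, hmono⟩ := exists_forall_chain_color_eq hTP χ
    exact ⟨j, α, H, fun F _ ↦ hH F, fun F G _ ↦ hlt F G, fun G _ ↦ hmono G⟩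

end MultiCST
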